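/- arXiv:2408.06392 — 4 statements merged into one kernel-verified Lean document; each statement's English description precedes it below -/
import Mathlib

section
/- (Discrete Borsuk–Ulam theorem.) Suppose a closed polygonal line A₁…A_{2k} does not pass through a point O (i.e., O is not in the union of its segments), and is symmetric with respect to O, meaning O is the midpoint of the segment AⱼA_{k+j} for every j = 1, …, k. Then the winding number w(A₁…A_{2k}, O) is an odd integer. -/
/-!
Modulo `2π`, the angle swept around `O` along a polygonal line telescopes to the difference of the
arguments of its endpoints. Along the first half of a symmetric line the endpoints are opposite, so
the swept angle is an odd multiple of `π`; the second half is the reflection of the first in `O`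
and sweeps the same angle. Doubling and dividing by `2π` leaves the same odd integer.
-/

open Finset Real

/-- The angle swept around `O` along the polygonal line with vertices `A 0, …, A n`: the sum of the
oriented angles, each in `(-π, π]`, at which its `n` edges are seen from `O`. If `A n = A 0`, it is
`2π` times the winding number around `O`. -/
noncomputable def sweptAngle (A : ℕ → ℂ) (O : ℂ) (n : ℕ) : ℝ :=
  ∑ j ∈ range n, Complex.arg ((A (j + 1) - O) / (A j - O))

section SweptAngle

variable {A : ℕ → ℂ} {O : ℂ}

theorem coe_sweptAngle (hA : ∀ j, A j ≠ O) (n : ℕ) :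
    (sweptAngle A O n : Angle) = Complex.arg (A n - O) - Complex.arg (A 0 - O) := by
  have edge (j : ℕ) : (Complex.arg ((A (j + 1) - O) / (A j - O)) : Angle) =
      Complex.arg (A (j + 1) - O) - Complex.arg (A j - O) :=
    Complex.arg_div_coe_angle (sub_ne_zero.mpr (hA _)) (sub_ne_zero.mpr (hA _))
  calc (sweptAngle A O n : Angle)
      = ∑ j ∈ range n, (Complex.arg ((A (j + 1) - O) / (A j - O)) : Angle) :=
        map_sum Angle.coeHom _ _
    _ = ∑ j ∈ range n, ((Complex.arg (A (j + 1) - O) : Angle) - Complex.arg (A j - O)) :=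
        sum_congr rfl fun j _ => edge j
    _ = Complex.arg (A n - O) - Complex.arg (A 0 - O) :=
        sum_range_sub (fun j => (Complex.arg (A j - O) : Angle)) n

theorem sweptAngle_add (A : ℕ → ℂ) (O : ℂ) (m n : ℕ) :
    sweptAngle A O (m + n) = sweptAngle A O m + sweptAngle (fun j => A (m + j)) O n :=
  sum_range_add _ m n

theorem sweptAngle_two_mul_sub (A : ℕ → ℂ) (O : ℂ) (n : ℕ) :
    sweptAngle (fun j => 2 * O - A j) O n = sweptAngle A O n := by
  have reflect (z : ℂ) : 2 * O - z - O = -(z - O) := by ring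
  simp only [sweptAngle, reflect, neg_div_neg_eq]

theorem exists_odd_sweptAngle_eq_mul_pi (hA : ∀ j, A j ≠ O) {n : ℕ}
    (hn : A 0 + A n = 2 * O) : ∃ m : ℤ, Odd m ∧ sweptAngle A O n = m * π := by
  have opposite : A n - O = -(A 0 - O) := by linear_combination hn
  have swept_eq_pi : (sweptAngle A O n : Angle) = (π : Angle) := by
    rw [coe_sweptAngle hA, opposite, Complex.arg_neg_coe_angle (sub_ne_zero.mpr (hA 0)),
      add_sub_cancel_left]
  obtain ⟨m, hm⟩ := Angle.angle_eq_iff_two_pi_dvd_sub.mp swept_eq_pi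
  refine ⟨2 * m + 1, odd_two_mul_add_one m, ?_⟩
  push_cast
  linear_combination hm

end SweptAngle

theorem discrete_borsuk_ulam_general (k : ℕ) (O : ℂ) (A : ℕ → ℂ)
    (hsym : ∀ j, A j + A (j + k) = 2 * O) (hA : ∀ j, A j ≠ O) :
    ∃ n : ℤ, Odd n ∧ sweptAngle A O (2 * k) / (2 * π) = n := by
  obtain ⟨n, n_odd, first_half⟩ :=
    exists_odd_sweptAngle_eq_mul_pi hA (by simpa only [zero_add] using hsym 0)
  have second_half : sweptAngle (fun j => A (k + j)) O k = sweptAngle A O k := by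
    have reflect (j : ℕ) : A (k + j) = 2 * O - A j := by
      rw [add_comm k j, ← hsym j, add_sub_cancel_left]
    simp only [reflect, sweptAngle_two_mul_sub]
  refine ⟨n, n_odd, ?_⟩
  rw [two_mul k, sweptAngle_add, second_half, first_half, div_eq_iff two_pi_pos.ne']
  ring

/-- Discrete Borsuk–Ulam theorem: Suppose a closed polygonal line
`A₁…A_{2k}` (encoded as a `2k`-periodic sequence `A : ℕ → ℂ`) does not pass through a
point `O` (i.e. `O` is not in the union of its segments), and is symmetric with respect
to `O` (i.e. `O` is the midpoint of the segment `AⱼA_{k+j}` for every `j`). Then the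
winding number `w(A₁…A_{2k}, O) = (∠A₁OA₂ + ⋯ + ∠A_{2k-1}OA_{2k} + ∠A_{2k}OA₁)/(2π)`
is an odd integer.  Here `∠AOB := Complex.arg ((B − O)/(A − O)) ∈ (−π, π]`. -/
theorem discrete_borsuk_ulam (k : ℕ) (hk : 0 < k) (O : ℂ) (A : ℕ → ℂ)
    (hper : ∀ j, A (j + 2 * k) = A j)
    (hsym : ∀ j, A j + A (j + k) = 2 * O)
    (hO : ∀ j, O ∉ segment ℝ (A j) (A (j + 1))) :
    ∃ n : ℤ, Odd n ∧
      (∑ j ∈ Finset.range (2 * k), Complex.arg ((A (j + 1) - O) / (A j - O))) /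
        (2 * Real.pi) = n :=
  discrete_borsuk_ulam_general k O A hsym fun j hj => hO j (hj ▸ left_mem_segment ℝ _ _)
end

section
/- Let L be a closed polygonal line in the plane, and let P₀ and P₁ be points joined by a polygonal line whose image is disjoint from the image of L. Then w(L, P₀) = w(L, P₁). -/
/-- Sum of the oriented angles ∠A₁OA₂ + ∠A₂OA₃ + ⋯ + ∠A_{m−1}OA_m at `O`
along a polygonal line given as a list of points in the plane `ℂ`,
where ∠AOB := Complex.arg ((B − O)/(A − O)) ∈ (−π, π]. -/
noncomputable def angSum (O : ℂ) : List ℂ → ℝ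
  | a :: b :: rest => Complex.arg ((b - O) / (a - O)) + angSum O (b :: rest)
  | _ => 0

/-- `w'(A₁…A_m, O)`: the (non-closed) winding number of a polygonal line around `O`,
i.e. `(∠A₁OA₂ + ⋯ + ∠A_{m−1}OA_m) / (2π)`. -/
noncomputable def wp (O : ℂ) (l : List ℂ) : ℝ := angSum O l / (2 * Real.pi)

/-- `w(A₁…A_m, O)`: the winding number of the closed polygonal line `A₁…A_m` around `O`,
i.e. `(∠A₁OA₂ + ⋯ + ∠A_{m−1}OA_m + ∠A_mOA₁) / (2π)`. -/
noncomputable def wcl (O : ℂ) (l : List ℂ) : ℝ := wp O (l ++ [l.headI])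

/-- The image of a polygonal line: the union of the segments between consecutive points. -/
def imagePL : List ℂ → Set ℂ
  | [] => ∅
  | [a] => {a}
  | a :: b :: rest => segment ℝ a b ∪ imagePL (b :: rest)

/-!
Off the segment `[a, b]` the oriented angle under which `O` sees `a` and `b` depends continuously on
`O`, because `(b - O) / (a - O)` meets the branch cut of `Complex.arg` only when `O` lies between
`a` and `b`. Hence the winding number of a closed polygonal line is continuous off its image.
Modulo `2π` the angles are differences of arguments, so their sum around a closed line telescopes
to `0` and the winding number is an integer. A continuous integer-valued function on a preconnected
set is constant.
-/

theorem mem_imagePL_of_mem {a : ℂ} {l : List ℂ} (ha : a ∈ l) : a ∈ imagePL l := by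
  fun_induction imagePL l with
  | case1 => exact absurd ha List.not_mem_nil
  | case2 b => simpa using ha
  | case3 b c l ih =>
    rcases List.mem_cons.mp ha with rfl | ha
    · exact Or.inl (left_mem_segment ℝ a c)
    · exact Or.inr (ih ha)

theorem isPreconnected_imagePL (l : List ℂ) : IsPreconnected (imagePL l) := by
  fun_induction imagePL l with
  | case1 => exact isPreconnected_empty
  | case2 a => exact isPreconnected_singleton
  | case3 a b l ih =>
    exact (convex_segment a b).isPreconnected.union b (right_mem_segment ℝ a b)
      (mem_imagePL_of_mem List.mem_cons_self) ih

theorem div_sub_mem_slitPlane {a b O : ℂ} (hO : O ∉ segment ℝ a b) :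
    (b - O) / (a - O) ∈ Complex.slitPlane := by
  have ha : a - O ≠ 0 := sub_ne_zero.mpr fun h ↦ hO (h ▸ left_mem_segment ℝ a b)
  have hb : b - O ≠ 0 := sub_ne_zero.mpr fun h ↦ hO (h ▸ right_mem_segment ℝ a b)
  refine Complex.mem_slitPlane_iff_arg.mpr ⟨fun harg ↦ hO ?_, div_ne_zero hb ha⟩
  have hangle : EuclideanGeometry.angle b O a = Real.pi := by
    rw [EuclideanGeometry.angle, vsub_eq_sub, vsub_eq_sub, Complex.angle_eq_abs_arg hb ha, harg,
      abs_of_pos Real.pi_pos]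
  exact mem_segment_iff_wbtw.mpr (EuclideanGeometry.angle_eq_pi_iff_sbtw.mp hangle).wbtw.symm

theorem continuousOn_arg_div_sub (a b : ℂ) :
    ContinuousOn (fun O ↦ Complex.arg ((b - O) / (a - O))) (segment ℝ a b)ᶜ := by
  have hdiv : ContinuousOn (fun O ↦ (b - O) / (a - O)) (segment ℝ a b)ᶜ :=
    ContinuousOn.div (by fun_prop) (by fun_prop) fun O hO ↦
      sub_ne_zero.mpr fun h ↦ hO (h ▸ left_mem_segment ℝ a b)
  exact Complex.continuousOn_arg.comp hdiv fun O hO ↦ div_sub_mem_slitPlane hO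

theorem continuousOn_angSum (l : List ℂ) :
    ContinuousOn (fun O ↦ angSum O l) (imagePL l)ᶜ := by
  fun_induction imagePL l with
  | case1 | case2 => exact continuousOn_const
  | case3 a b l ih =>
    rw [Set.compl_union]
    exact ((continuousOn_arg_div_sub a b).mono Set.inter_subset_left).add
      (ih.mono Set.inter_subset_right)

theorem continuousOn_wcl (L : List ℂ) :
    ContinuousOn (fun O ↦ wcl O L) (imagePL (L ++ [L.headI]))ᶜ :=
  (continuousOn_angSum _).div_const _

theorem coe_angSum_eq_arg_sub_arg {O : ℂ} {l : List ℂ} (hl : l ≠ []) (hO : O ∉ l) :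
    (angSum O l : Real.Angle) =
      Complex.arg (l.getLast hl - O) - Complex.arg (l.head hl - O) := by
  fun_induction angSum O l with
  | case1 a b l ih =>
    have ha : a - O ≠ 0 := sub_ne_zero.mpr (List.ne_of_not_mem_cons hO).symm
    have hO' : O ∉ b :: l := List.not_mem_of_not_mem_cons hO
    have hb : b - O ≠ 0 := sub_ne_zero.mpr (List.ne_of_not_mem_cons hO').symm
    rw [Real.Angle.coe_add, ih (List.cons_ne_nil b l) hO', Complex.arg_div_coe_angle hb ha,
      List.getLast_cons (List.cons_ne_nil b l), List.head_cons, List.head_cons]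
    abel
  | case2 l hshort =>
    match l, hl with
    | [a], _ => simp
    | a :: b :: l, _ => exact absurd rfl (hshort a b l)

theorem wcl_mem_range_intCast {O : ℂ} {L : List ℂ} (hL : L ≠ []) (hO : O ∉ L) :
    wcl O L ∈ Set.range ((↑) : ℤ → ℝ) := by
  obtain ⟨a, l, rfl⟩ := List.exists_cons_of_ne_nil hL
  have hclosed : O ∉ a :: l ++ [a] := by simp_all
  have hzero : (angSum O (a :: l ++ [a]) : Real.Angle) = (0 : ℝ) := by
    rw [coe_angSum_eq_arg_sub_arg (by simp) hclosed]
    simp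
  obtain ⟨k, hk⟩ := Real.Angle.angle_eq_iff_two_pi_dvd_sub.mp hzero
  refine ⟨k, ?_⟩
  rw [wcl, wp, List.headI_cons, eq_div_iff Real.two_pi_pos.ne', mul_comm, ← hk, sub_zero]

theorem winding_constant_on_connected_complement_general {L : List ℂ} (hL : L ≠ [])
    {S : Set ℂ} (hS : IsPreconnected S) (hdisj : Disjoint (imagePL (L ++ [L.headI])) S)
    {P₀ P₁ : ℂ} (h0 : P₀ ∈ S) (h1 : P₁ ∈ S) :
    wcl P₀ L = wcl P₁ L := by
  have hcont : ContinuousOn (fun O ↦ wcl O L) S :=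
    (continuousOn_wcl L).mono hdisj.subset_compl_left
  have hint : Set.MapsTo (fun O ↦ wcl O L) S (Set.range ((↑) : ℤ → ℝ)) := fun O hO ↦
    wcl_mem_range_intCast hL fun hOL ↦
      hdisj.notMem_of_mem_right hO (mem_imagePL_of_mem (List.mem_append_left _ hOL))
  exact hS.constant_of_mapsTo Int.isClosedEmbedding_coe_real.isInducing.isDiscrete_range
    hcont hint h0 h1

/-- Let `L` be a closed polygonal line in the plane, and let `P₀` and `P₁`
be points joined by a polygonal line `P` whose image is disjoint from the image of `L`
(for the closed line `L` the image includes the segment from the last point back to the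
first). Then `w(L, P₀) = w(L, P₁)`. -/
theorem winding_constant_on_connected_complement (L P : List ℂ)
    (hL : L ≠ []) (hP : P ≠ [])
    (P₀ P₁ : ℂ) (h0 : P.headI = P₀) (h1 : P.getLast hP = P₁)
    (hdisj : Disjoint (imagePL (L ++ [L.headI])) (imagePL P)) :
    wcl P₀ L = wcl P₁ L := by
  have hP₀ : P₀ ∈ P := by
    obtain ⟨a, l, rfl⟩ := List.exists_cons_of_ne_nil hP
    exact h0 ▸ List.mem_cons_self
  have hP₁ : P₁ ∈ P := h1 ▸ List.getLast_mem hP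
  exact winding_constant_on_connected_complement_general hL (isPreconnected_imagePL P) hdisj
    (mem_imagePL_of_mem hP₀) (mem_imagePL_of_mem hP₁)
end

section
/- (Hanani–Tutte; van Kampen.) Let f be any map of K₅ to the plane, given by five points f₁, …, f₅ and, for each edge {i,j} of K₅, a polygonal line p_{ij} joining fᵢ to fⱼ. Then there exist two non-adjacent edges {a,b} and {c,d} of K₅ (i.e., {a,b} ∩ {c,d} = ∅) whose images intersect: the image of p_{ab} meets the image of p_{cd}. -/
/-!
For disjoint segments `AB` and `CD`, a line separating them shows that `∠ACB - ∠ADB = ∠CAD - ∠CBD`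
holds for oriented angles as an equality of real numbers. This extends additively to disjoint
polygonal lines.

Suppose that non-adjacent edges are disjoint. Applying the identity to the three pairs of opposite
edges of a `K₄` shows that the winding numbers of its four triangles around the respective opposite
vertices have odd sum; the parity comes from the angle sum `π` of a triangle. Applying it to the
edge `de` and the sides of the triangle `abc` shows that this triangle winds equally often around
`d` and `e`. Now join `d` and `e` when this number is odd: every vertex of the resulting graph on
five vertices has odd degree, which is impossible.
-/

open Real

lemma arg_div_of_re_pos {z w : ℂ} (hz : 0 < z.re) (hw : 0 < w.re) :
    (z / w).arg = z.arg - w.arg := by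
  have hz₀ : z ≠ 0 := by rintro rfl; simp at hz
  have hw₀ : w ≠ 0 := by rintro rfl; simp at hw
  have hz_arg := abs_lt.1 (Complex.abs_arg_lt_pi_div_two_iff.2 (Or.inl hz))
  have hw_arg := abs_lt.1 (Complex.abs_arg_lt_pi_div_two_iff.2 (Or.inl hw))
  have hw_inv : w⁻¹.arg = -w.arg := by
    rw [Complex.arg_inv, if_neg (by linarith [pi_pos])]
  have h_mem : z.arg + w⁻¹.arg ∈ Set.Ioc (-π) π := by
    rw [hw_inv]
    exact ⟨by linarith, by linarith⟩
  rw [div_eq_mul_inv, Complex.arg_mul hz₀ (inv_ne_zero hw₀) h_mem, hw_inv, sub_eq_add_neg]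

lemma exists_forall_re_mul_sub_pos {K L : Set ℂ} (hK : Convex ℝ K) (hKc : IsCompact K)
    (hL : Convex ℝ L) (hLc : IsClosed L) (hKL : Disjoint K L) :
    ∃ v : ℂ, ∀ P ∈ K, ∀ Q ∈ L, 0 < (v * (P - Q)).re := by
  obtain ⟨g, r, s, hr, hrs, hs⟩ := geometric_hahn_banach_compact_closed hK hKc hL hLc hKL
  refine ⟨-(starRingEnd ℂ) ((InnerProductSpace.toDual ℝ ℂ).symm g), fun P hP Q hQ ↦ ?_⟩
  have hg : ∀ z, ((starRingEnd ℂ) ((InnerProductSpace.toDual ℝ ℂ).symm g) * z).re = g z := by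
    intro z
    rw [← InnerProductSpace.toDual_symm_apply, Complex.inner, mul_comm]
  rw [neg_mul, Complex.neg_re, hg, map_sub]
  linarith [hr P hP, hs Q hQ]

lemma arg_sub_arg_eq_of_disjoint_segment {A B C D : ℂ}
    (h : Disjoint (segment ℝ A B) (segment ℝ C D)) :
    ((B - C) / (A - C)).arg - ((B - D) / (A - D)).arg =
      ((D - A) / (C - A)).arg - ((D - B) / (C - B)).arg := by
  have segment_compact : ∀ x y : ℂ, IsCompact (segment ℝ x y) := fun x y ↦ by
    rw [← convexHull_pair]
    exact (Set.toFinite _).isCompact_convexHull ℝ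
  obtain ⟨v, hv⟩ := exists_forall_re_mul_sub_pos (convex_segment A B) (segment_compact A B)
    (convex_segment C D) (segment_compact C D).isClosed h
  have arg_div : ∀ P ∈ segment ℝ A B, ∀ Q ∈ segment ℝ C D,
      ∀ P' ∈ segment ℝ A B, ∀ Q' ∈ segment ℝ C D,
      ((P - Q) / (P' - Q')).arg = (v * (P - Q)).arg - (v * (P' - Q')).arg := by
    intro P hP Q hQ P' hP' Q' hQ'
    have hv₀ : v ≠ 0 := by rintro rfl; simpa using hv P hP Q hQ
    rw [← mul_div_mul_left _ _ hv₀, arg_div_of_re_pos (hv P hP Q hQ) (hv P' hP' Q' hQ')]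
  have hA := left_mem_segment ℝ A B
  have hB := right_mem_segment ℝ A B
  have hC := left_mem_segment ℝ C D
  have hD := right_mem_segment ℝ C D
  rw [← neg_sub A D, ← neg_sub A C, ← neg_sub B D, ← neg_sub B C, neg_div_neg_eq, neg_div_neg_eq,
    arg_div B hB C hC A hA C hC, arg_div B hB D hD A hA D hD,
    arg_div A hA D hD A hA C hC, arg_div B hB D hD B hB C hC]
  ring

/-- The polygonal line `l` joins `A` to `B`: its first point is `A` and its last point is `B`.
In particular, `l` is nonempty. -/
def Joins (l : List ℂ) (A B : ℂ) : Prop :=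
  l.head? = some A ∧ l.getLast? = some B

lemma joins_of_headI_of_getLast {l : List ℂ} {A B : ℂ} (hl : l ≠ []) (hA : l.headI = A)
    (hB : l.getLast hl = B) : Joins l A B := by
  cases l with
  | nil => contradiction
  | cons a l => exact ⟨congrArg some hA, by rw [List.getLast?_eq_some_getLast hl, hB]⟩

lemma not_joins_nil {A B : ℂ} : ¬ Joins [] A B := by
  simp [Joins]

lemma joins_singleton {a A B : ℂ} : Joins [a] A B ↔ a = A ∧ a = B := by
  simp [Joins]

lemma joins_cons_cons {a b A B : ℂ} {l : List ℂ} :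
    Joins (a :: b :: l) A B ↔ a = A ∧ Joins (b :: l) b B := by
  simp [Joins]

namespace Joins

variable {A B C D O : ℂ} {l p q r : List ℂ}

lemma left_mem_imagePL (h : Joins l A B) : A ∈ imagePL l := by
  match l, h with
  | [], h => exact absurd h not_joins_nil
  | [a], h => exact (joins_singleton.1 h).1.symm
  | a :: b :: l, h =>
    obtain ⟨rfl, -⟩ := joins_cons_cons.1 h
    exact Or.inl (left_mem_segment ℝ a b)

lemma right_mem_imagePL (h : Joins l A B) : B ∈ imagePL l := by
  induction l generalizing A with
  | nil => exact absurd h not_joins_nil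
  | cons a l ih =>
    cases l with
    | nil => exact (joins_singleton.1 h).2.symm
    | cons b l => exact Or.inr (ih (joins_cons_cons.1 h).2)

lemma arg_sub_arg_eq (hq : Joins q C D) (h : Disjoint (segment ℝ A B) (imagePL q)) :
    ((B - C) / (A - C)).arg - ((B - D) / (A - D)).arg = angSum A q - angSum B q := by
  induction q generalizing C with
  | nil => exact absurd hq not_joins_nil
  | cons c q ih =>
    cases q with
    | nil =>
      obtain ⟨rfl, rfl⟩ := joins_singleton.1 hq
      simp only [angSum, sub_self]
    | cons d q =>
      obtain ⟨rfl, hq'⟩ := joins_cons_cons.1 hq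
      obtain ⟨h_seg, h_tail⟩ := Set.disjoint_union_right.1 h
      have e_seg := arg_sub_arg_eq_of_disjoint_segment h_seg
      have e_tail := ih hq' h_tail
      simp only [angSum]
      linarith

lemma angSum_sub_angSum (hp : Joins p A B) (hq : Joins q C D)
    (h : Disjoint (imagePL p) (imagePL q)) :
    angSum C p - angSum D p = angSum A q - angSum B q := by
  induction p generalizing A with
  | nil => exact absurd hp not_joins_nil
  | cons a p ih =>
    cases p with
    | nil =>
      obtain ⟨rfl, rfl⟩ := joins_singleton.1 hp
      simp only [angSum, sub_self]
    | cons b p =>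
      obtain ⟨rfl, hp'⟩ := joins_cons_cons.1 hp
      obtain ⟨h_seg, h_tail⟩ := Set.disjoint_union_left.1 h
      have e_seg := hq.arg_sub_arg_eq h_seg
      have e_tail := ih hp' h_tail
      simp only [angSum]
      linarith

lemma wp_sub_wp (hp : Joins p A B) (hq : Joins q C D) (h : Disjoint (imagePL p) (imagePL q)) :
    wp C p - wp D p = wp A q - wp B q := by
  simp only [wp, ← sub_div, hp.angSum_sub_angSum hq h]

lemma coe_angSum (hp : Joins p A B) (hO : O ∉ imagePL p) :
    (angSum O p : Angle) = (B - O).arg - (A - O).arg := by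
  induction p generalizing A with
  | nil => exact absurd hp not_joins_nil
  | cons a p ih =>
    cases p with
    | nil =>
      obtain ⟨rfl, rfl⟩ := joins_singleton.1 hp
      simp only [angSum, Angle.coe_zero, sub_self]
    | cons b p =>
      obtain ⟨rfl, hp'⟩ := joins_cons_cons.1 hp
      obtain ⟨hO_seg, hO_tail⟩ := not_or.1 hO
      have ha : a - O ≠ 0 :=
        sub_ne_zero.2 fun e ↦ hO_seg (e ▸ left_mem_segment ℝ a b)
      have hb : b - O ≠ 0 :=
        sub_ne_zero.2 fun e ↦ hO_seg (e ▸ right_mem_segment ℝ a b)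
      rw [angSum, Angle.coe_add, ih hp' hO_tail, Complex.arg_div_coe_angle hb ha]
      abel

end Joins

/-- The winding number around `O` of the closed polygonal line that runs along `p` and `q` and then
back along the reverse of `r`. The last side is subtracted, so that no reversed line appears. -/
noncomputable def triangleWinding (O : ℂ) (p q r : List ℂ) : ℝ :=
  wp O p + wp O q - wp O r

section Triangle

variable {A B C O : ℂ} {p q r : List ℂ}

lemma exists_int_triangleWinding_eq (hp : Joins p A B) (hq : Joins q B C) (hr : Joins r A C)
    (hOp : O ∉ imagePL p) (hOq : O ∉ imagePL q) (hOr : O ∉ imagePL r) :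
    ∃ n : ℤ, triangleWinding O p q r = n := by
  have h_angle : ((angSum O p + angSum O q - angSum O r : ℝ) : Angle) = 0 := by
    rw [Angle.coe_sub, Angle.coe_add, hp.coe_angSum hOp, hq.coe_angSum hOq, hr.coe_angSum hOr]
    abel
  obtain ⟨n, hn⟩ := Angle.coe_eq_zero_iff.1 h_angle
  refine ⟨n, ?_⟩
  rw [triangleWinding, wp, wp, wp, ← add_div, ← sub_div, ← hn, zsmul_eq_mul,
    mul_div_cancel_right₀ _ two_pi_pos.ne']

lemma triangle_angle_sum (hAB : A ≠ B) (hBC : B ≠ C) (hAC : A ≠ C) :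
    ((C - A).arg - (B - A).arg + ((B - C).arg - (A - C).arg) - ((C - B).arg - (A - B).arg) : Angle)
      = π := by
  have hA : ((A - B).arg : Angle) = (B - A).arg + π := by
    rw [← neg_sub, Complex.arg_neg_coe_angle (sub_ne_zero.2 hAB.symm)]
  have hB : ((B - C).arg : Angle) = (C - B).arg + π := by
    rw [← neg_sub, Complex.arg_neg_coe_angle (sub_ne_zero.2 hBC.symm)]
  have hC : ((A - C).arg : Angle) = (C - A).arg + π := by
    rw [← neg_sub, Complex.arg_neg_coe_angle (sub_ne_zero.2 hAC.symm)]
  rw [hA, hB, hC]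
  abel

lemma exists_int_wp_opposite_eq (hp : Joins p A B) (hq : Joins q B C) (hr : Joins r A C)
    (hA : A ∉ imagePL q) (hB : B ∉ imagePL r) (hC : C ∉ imagePL p) :
    ∃ k : ℤ, wp A q + wp C p - wp B r = 1 / 2 + k := by
  have hAB : A ≠ B := fun e ↦ hA (e ▸ hq.left_mem_imagePL)
  have hBC : B ≠ C := fun e ↦ hB (e ▸ hr.right_mem_imagePL)
  have hAC : A ≠ C := fun e ↦ hA (e ▸ hq.right_mem_imagePL)
  have h_angle : ((angSum A q + angSum C p - angSum B r : ℝ) : Angle) = π := by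
    rw [Angle.coe_sub, Angle.coe_add, hq.coe_angSum hA, hp.coe_angSum hC, hr.coe_angSum hB,
      triangle_angle_sum hAB hBC hAC]
  obtain ⟨k, hk⟩ := Angle.angle_eq_iff_two_pi_dvd_sub.1 h_angle
  refine ⟨k, ?_⟩
  rw [wp, wp, wp, ← add_div, ← sub_div, sub_eq_iff_eq_add'.1 hk]
  field_simp

end Triangle

/-- The points `f i` and the polygonal lines `p i j` form an almost embedding of the complete graph
on `V`: the edge `{i, j}` is mapped to a line joining its endpoints, and non-adjacent edges have
disjoint images. The lines `p i j` and `p j i` need not be related, and `p i i` is arbitrary. -/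
structure IsAlmostEmbedding {V : Type*} (f : V → ℂ) (p : V → V → List ℂ) : Prop where
  joins : ∀ i j, i ≠ j → Joins (p i j) (f i) (f j)
  disjoint : ∀ a b c d, [a, b, c, d].Nodup → Disjoint (imagePL (p a b)) (imagePL (p c d))

namespace IsAlmostEmbedding

variable {V W : Type*} {f : V → ℂ} {p : V → V → List ℂ} {a b c d e : V}

lemma comp_embedding (h : IsAlmostEmbedding f p) (v : W ↪ V) :
    IsAlmostEmbedding (f ∘ v) (fun i j ↦ p (v i) (v j)) where
  joins _ _ hij := h.joins _ _ (v.injective.ne hij)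
  disjoint _ _ _ _ hnd := h.disjoint _ _ _ _ ((List.nodup_map_iff v.injective).2 hnd)

lemma notMem_imagePL (h : IsAlmostEmbedding f p) (hnd : [a, b, c, d].Nodup) :
    f a ∉ imagePL (p c d) :=
  Set.disjoint_left.1 (h.disjoint a b c d hnd) (h.joins a b (by grind)).left_mem_imagePL

lemma wp_sub_wp (h : IsAlmostEmbedding f p) (a b c d : V) (hnd : [a, b, c, d].Nodup) :
    wp (f c) (p a b) - wp (f d) (p a b) = wp (f a) (p c d) - wp (f b) (p c d) :=
  (h.joins a b (by grind)).wp_sub_wp (h.joins c d (by grind)) (h.disjoint a b c d hnd)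

lemma exists_int_triangleWinding_eq (h : IsAlmostEmbedding f p) (a b c d : V)
    (hnd : [a, b, c, d].Nodup) :
    ∃ n : ℤ, triangleWinding (f d) (p a b) (p b c) (p a c) = n :=
  _root_.exists_int_triangleWinding_eq (h.joins a b (by grind)) (h.joins b c (by grind))
    (h.joins a c (by grind)) (h.notMem_imagePL (b := c) (by grind))
    (h.notMem_imagePL (b := a) (by grind)) (h.notMem_imagePL (b := b) (by grind))

lemma triangleWinding_congr (h : IsAlmostEmbedding f p) (hnd : [a, b, c, d, e].Nodup) :
    triangleWinding (f d) (p a b) (p b c) (p a c) =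
      triangleWinding (f e) (p a b) (p b c) (p a c) := by
  have hab := h.wp_sub_wp a b d e (by grind)
  have hbc := h.wp_sub_wp b c d e (by grind)
  have hac := h.wp_sub_wp a c d e (by grind)
  unfold triangleWinding
  linarith

lemma exists_sum_triangleWinding_eq_two_mul_add_one (h : IsAlmostEmbedding f p)
    (hnd : [a, b, c, d].Nodup) :
    ∃ k : ℤ, triangleWinding (f a) (p b c) (p c d) (p b d) +
      triangleWinding (f b) (p a c) (p c d) (p a d) +
      triangleWinding (f c) (p a b) (p b d) (p a d) +
      triangleWinding (f d) (p a b) (p b c) (p a c) = 2 * k + 1 := by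
  have h_ab_cd := h.wp_sub_wp a b c d hnd
  have h_bc_ad := h.wp_sub_wp b c a d (by grind)
  have h_ac_bd := h.wp_sub_wp a c b d (by grind)
  obtain ⟨n, hn⟩ := h.exists_int_triangleWinding_eq a c d b (by grind)
  obtain ⟨k, hk⟩ := exists_int_wp_opposite_eq (h.joins a b (by grind)) (h.joins b c (by grind))
    (h.joins a c (by grind)) (h.notMem_imagePL (b := d) (by grind))
    (h.notMem_imagePL (b := d) (by grind)) (h.notMem_imagePL (b := d) (by grind))
  -- Writing `W_v` for the winding number around `v`, the three identities and `hk` give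
  -- `W_a - W_b + W_c + W_d = 2 * k + 1`.
  refine ⟨k + n, ?_⟩
  push_cast
  rw [← hn]
  unfold triangleWinding
  linarith

end IsAlmostEmbedding

lemma not_isAlmostEmbedding_fin_five {f : Fin 5 → ℂ} {p : Fin 5 → Fin 5 → List ℂ} :
    ¬ IsAlmostEmbedding f p := by
  intro h
  have common : ∀ a b c d e, [a, b, c, d, e].Nodup → ∃ m : ℤ,
      triangleWinding (f d) (p a b) (p b c) (p a c) = m ∧
        triangleWinding (f e) (p a b) (p b c) (p a c) = m := fun a b c d e hnd ↦ by
    obtain ⟨m, hm⟩ := h.exists_int_triangleWinding_eq a b c d (by grind)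
    exact ⟨m, hm, h.triangleWinding_congr hnd ▸ hm⟩
  -- `mᵢⱼ` is indexed by the edge `ij` complementary to the triangle.
  obtain ⟨m₀₁, h₀₁, h₁₀⟩ := common 2 3 4 0 1 (by decide)
  obtain ⟨m₀₂, h₀₂, h₂₀⟩ := common 1 3 4 0 2 (by decide)
  obtain ⟨m₀₃, h₀₃, h₃₀⟩ := common 1 2 4 0 3 (by decide)
  obtain ⟨m₀₄, h₀₄, h₄₀⟩ := common 1 2 3 0 4 (by decide)
  obtain ⟨m₁₂, h₁₂, h₂₁⟩ := common 0 3 4 1 2 (by decide)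
  obtain ⟨m₁₃, h₁₃, h₃₁⟩ := common 0 2 4 1 3 (by decide)
  obtain ⟨m₁₄, h₁₄, h₄₁⟩ := common 0 2 3 1 4 (by decide)
  obtain ⟨m₂₃, h₂₃, h₃₂⟩ := common 0 1 4 2 3 (by decide)
  obtain ⟨m₂₄, h₂₄, h₄₂⟩ := common 0 1 3 2 4 (by decide)
  obtain ⟨m₃₄, h₃₄, h₄₃⟩ := common 0 1 2 3 4 (by decide)
  obtain ⟨k₀, hk₀⟩ :=
    h.exists_sum_triangleWinding_eq_two_mul_add_one (show [1, 2, 3, 4].Nodup by decide)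
  obtain ⟨k₁, hk₁⟩ :=
    h.exists_sum_triangleWinding_eq_two_mul_add_one (show [0, 2, 3, 4].Nodup by decide)
  obtain ⟨k₂, hk₂⟩ :=
    h.exists_sum_triangleWinding_eq_two_mul_add_one (show [0, 1, 3, 4].Nodup by decide)
  obtain ⟨k₃, hk₃⟩ :=
    h.exists_sum_triangleWinding_eq_two_mul_add_one (show [0, 1, 2, 4].Nodup by decide)
  obtain ⟨k₄, hk₄⟩ :=
    h.exists_sum_triangleWinding_eq_two_mul_add_one (show [0, 1, 2, 3].Nodup by decide)
  have double_count : (2 * (m₀₁ + m₀₂ + m₀₃ + m₀₄ + m₁₂ + m₁₃ + m₁₄ + m₂₃ + m₂₄ + m₃₄) : ℝ) =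
      2 * (k₀ + k₁ + k₂ + k₃ + k₄) + 5 := by
    linarith
  norm_cast at double_count
  omega

theorem hanani_tutte_K5_general {V : Type*} (hV : 5 ≤ ENat.card V) (f : V → ℂ)
    (p : V → V → List ℂ) (hp : ∀ i j, i ≠ j → Joins (p i j) (f i) (f j)) :
    ∃ a b c d : V, a ≠ b ∧ c ≠ d ∧ a ≠ c ∧ a ≠ d ∧ b ≠ c ∧ b ≠ d ∧
      (imagePL (p a b) ∩ imagePL (p c d)).Nonempty := by
  by_contra! hcon
  obtain ⟨v⟩ : Nonempty (Fin 5 ↪ V) := by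
    rw [← Cardinal.lift_mk_le', Cardinal.lift_mk_fin]
    simpa using Cardinal.natCast_le_toENat.1 hV
  have h : IsAlmostEmbedding f p := ⟨hp, fun a b c d hnd ↦ Set.disjoint_iff_inter_eq_empty.2 <|
    hcon a b c d (by grind) (by grind) (by grind) (by grind) (by grind) (by grind)⟩
  exact not_isAlmostEmbedding_fin_five (h.comp_embedding v)

/-- Hanani–Tutte; van Kampen: Let `f` be any map of `K₅` to the plane,
given by five points `f 0, …, f 4` and, for each edge `{i,j}` of `K₅`, a polygonal line
`p i j` joining `f i` to `f j` (with `p j i` the reverse of `p i j`). Then there exist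
two non-adjacent edges `{a,b}` and `{c,d}` of `K₅` (i.e. `{a,b} ∩ {c,d} = ∅`) whose
images intersect. -/
theorem hanani_tutte_K5 (f : Fin 5 → ℂ) (p : Fin 5 → Fin 5 → List ℂ)
    (hne : ∀ i j, i ≠ j → p i j ≠ [])
    (hjoin : ∀ i j, ∀ h : i ≠ j,
      (p i j).headI = f i ∧ (p i j).getLast (hne i j h) = f j)
    (hsym : ∀ i j, p j i = (p i j).reverse) :
    ∃ a b c d : Fin 5, a ≠ b ∧ c ≠ d ∧ a ≠ c ∧ a ≠ d ∧ b ≠ c ∧ b ≠ d ∧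
      (imagePL (p a b) ∩ imagePL (p c d)).Nonempty := by
  exact hanani_tutte_K5_general (by simp) f p fun i j h ↦
    joins_of_headI_of_getLast (hne i j h) (hjoin i j h).1 (hjoin i j h).2
end

section
/- Let f be an almost embedding of K₄ in the plane. Then the integer w_f(234, 1) + w_f(134, 2) + w_f(124, 3) + w_f(123, 4) is odd, where w_f(ijk, l) := w'(p_{ij}, f_l) + w'(p_{jk}, f_l) + w'(p_{ki}, f_l). -/
/-!
Two disjoint segments `ab` and `cd` can be separated by a line, so the arguments of the four
differences `a - c`, `a - d`, `b - c`, `b - d` have simultaneous branches in an open half-plane.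
Hence the change of the winding of `cd` as its centre jumps from `a` to `b` equals the change of the
winding of `ab` as its centre jumps from `c` to `d`, and summing over segments gives the same
exchange rule for disjoint polygonal lines.

For the three pairs of opposite edges of `K₄` the exchange rule turns the sum of the four winding
numbers into `2 (t + w)`. Here `w = w_f(134, 2)` is an integer, and `t` is the sum over the edges of
the triangle `123` of their windings around the opposite vertices, which is half an odd integer
since the oriented angles of a triangle add up to `π` modulo `2π`.
-/

/-- `Joins l a b` says that the polygonal line `l`, a nonempty list, joins its first point `a` to
its last point `b`. The inductive form lets proofs follow the line segment by segment. -/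
inductive Joins_s11 {α : Type*} : List α → α → α → Prop
  | singleton (a : α) : Joins_s11 [a] a a
  | cons (a : α) {b c : α} {l : List α} (h : Joins_s11 (b :: l) b c) : Joins_s11 (a :: b :: l) a c

theorem joins_headI_getLast {α : Type*} [Inhabited α] :
    ∀ (l : List α) (hl : l ≠ []), Joins_s11 l l.headI (l.getLast hl)
  | [a], _ => .singleton a
  | a :: b :: l, _ => .cons a (joins_headI_getLast (b :: l) (List.cons_ne_nil b l))

namespace Joins_s11

variable {a b : ℂ} {l : List ℂ}

theorem left_mem_imagePL_s11 (h : Joins_s11 l a b) : a ∈ imagePL l := by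
  cases h with
  | singleton => rfl
  | cons _ _ => exact .inl (left_mem_segment ℝ _ _)

theorem right_mem_imagePL_s11 (h : Joins_s11 l a b) : b ∈ imagePL l := by
  induction h with
  | singleton => rfl
  | cons _ _ ih => exact .inr ih

theorem coe_angSum_s11 {O : ℂ} (h : Joins_s11 l a b) (hO : O ∉ imagePL l) :
    (angSum O l : Real.Angle) = Complex.arg ((b - O) / (a - O)) := by
  induction h with
  | singleton a => simp [angSum]
  | @cons a b c l h ih =>
    obtain ⟨hab, hl⟩ := not_or.mp hO
    have ha : a - O ≠ 0 := sub_ne_zero.mpr (ne_of_mem_of_not_mem (left_mem_segment ℝ a b) hab)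
    have hb : b - O ≠ 0 := sub_ne_zero.mpr (ne_of_mem_of_not_mem (right_mem_segment ℝ a b) hab)
    have hc : c - O ≠ 0 := sub_ne_zero.mpr (ne_of_mem_of_not_mem h.right_mem_imagePL_s11 hl)
    rw [angSum, Real.Angle.coe_add, ih hl,
      ← Complex.arg_mul_coe_angle (div_ne_zero hb ha) (div_ne_zero hc hb), mul_comm,
      div_mul_div_cancel₀ hb]

end Joins_s11

theorem arg_div_ne_pi_of_notMem_segment {O a b : ℂ} (h : O ∉ segment ℝ a b) :
    Complex.arg ((b - O) / (a - O)) ≠ Real.pi := by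
  intro hpi
  have ha : a - O ≠ 0 := sub_ne_zero.mpr (ne_of_mem_of_not_mem (left_mem_segment ℝ a b) h)
  have hb : b - O ≠ 0 := sub_ne_zero.mpr (ne_of_mem_of_not_mem (right_mem_segment ℝ a b) h)
  have hangle : EuclideanGeometry.angle b O a = Real.pi :=
    (Complex.angle_eq_abs_arg hb ha).trans (by rw [hpi, abs_of_pos Real.pi_pos])
  apply h
  rw [segment_symm]
  exact mem_segment_iff_wbtw.mpr (EuclideanGeometry.angle_eq_pi_iff_sbtw.mp hangle).wbtw

theorem angSum_append_cons (O : ℂ) (l : List ℂ) (a : ℂ) (r : List ℂ) :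
    angSum O (l ++ a :: r) = angSum O (l ++ [a]) + angSum O (a :: r) := by
  match l with
  | [] => simp [angSum]
  | [b] => simp [angSum]
  | b :: c :: l =>
    have ih := angSum_append_cons O (c :: l) a r
    simp only [List.cons_append, angSum] at ih ⊢
    rw [ih, add_assoc]

theorem angSum_reverse {O : ℂ} : ∀ {l : List ℂ}, O ∉ imagePL l →
    angSum O l.reverse = -angSum O l
  | [], _ => by simp [angSum]
  | [a], _ => by simp [angSum]
  | a :: b :: l, h => by
    obtain ⟨hab, hl⟩ := not_or.mp h
    have harg : Complex.arg ((a - O) / (b - O)) = -Complex.arg ((b - O) / (a - O)) := by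
      rw [← inv_div, Complex.arg_inv, if_neg (arg_div_ne_pi_of_notMem_segment hab)]
    calc angSum O (a :: b :: l).reverse
        = angSum O (l.reverse ++ b :: [a]) := by simp
      _ = angSum O (b :: l).reverse + Complex.arg ((a - O) / (b - O)) := by
        rw [angSum_append_cons, List.reverse_cons]; simp [angSum]
      _ = -angSum O (a :: b :: l) := by
        rw [angSum_reverse hl, harg, angSum]; ring

theorem wp_reverse {O : ℂ} {l : List ℂ} (h : O ∉ imagePL l) : wp O l.reverse = -wp O l := by
  rw [wp, angSum_reverse h, neg_div, wp]

theorem isCompact_segment {E : Type*} [AddCommGroup E] [Module ℝ E] [TopologicalSpace E]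
    [IsTopologicalAddGroup E] [ContinuousSMul ℝ E] (a b : E) : IsCompact (segment ℝ a b) := by
  rw [← convexHull_pair]
  exact (Set.toFinite {a, b}).isCompact_convexHull ℝ

theorem exists_forall_re_mul_sub_pos_s11 {s t : Set ℂ} (hs : Convex ℝ s) (hsc : IsCompact s)
    (ht : Convex ℝ t) (htc : IsClosed t) (hst : Disjoint s t) :
    ∃ u : ℂ, ∀ x ∈ s, ∀ y ∈ t, 0 < (u * (y - x)).re := by
  obtain ⟨g, v, w, hgs, hvw, hgt⟩ :=
    RCLike.geometric_hahn_banach_compact_closed (𝕜 := ℂ) hs hsc ht htc hst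
  have hg (z : ℂ) : g 1 * z = g z := by
    rw [mul_comm, ← smul_eq_mul, ← map_smul, smul_eq_mul, mul_one]
  refine ⟨g 1, fun x hx y hy => ?_⟩
  rw [hg, map_sub, Complex.sub_re, sub_pos]
  exact (hgs x hx).trans (hvw.trans (hgt y hy))

theorem arg_div_eq_sub_of_re_mul_pos {u z w : ℂ} (hz : 0 < (u * z).re) (hw : 0 < (u * w).re) :
    Complex.arg (z / w) = Complex.arg (u * z) - Complex.arg (u * w) := by
  have hz0 : u * z ≠ 0 := by intro h; simp [h] at hz
  have hw0 : u * w ≠ 0 := by intro h; simp [h] at hw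
  have hargz := abs_lt.mp (Complex.abs_arg_lt_pi_div_two_iff.mpr (.inl hz))
  have hargw := abs_lt.mp (Complex.abs_arg_lt_pi_div_two_iff.mpr (.inl hw))
  rw [← mul_div_mul_left z w (left_ne_zero_of_mul hz0), ← Complex.arg_coe_angle_toReal_eq_arg,
    Complex.arg_div_coe_angle hz0 hw0, ← Real.Angle.coe_sub, Real.Angle.toReal_coe_eq_self_iff]
  constructor <;> linarith

theorem arg_div_sub_arg_div_comm {a b c d : ℂ} (h : Disjoint (segment ℝ a b) (segment ℝ c d)) :
    Complex.arg ((d - b) / (c - b)) - Complex.arg ((d - a) / (c - a)) =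
      Complex.arg ((b - d) / (a - d)) - Complex.arg ((b - c) / (a - c)) := by
  obtain ⟨u, hu⟩ := exists_forall_re_mul_sub_pos_s11 (convex_segment c d) (isCompact_segment c d)
    (convex_segment a b) (isCompact_segment a b).isClosed h.symm
  have hac := hu c (left_mem_segment ℝ c d) a (left_mem_segment ℝ a b)
  have had := hu d (right_mem_segment ℝ c d) a (left_mem_segment ℝ a b)
  have hbc := hu c (left_mem_segment ℝ c d) b (right_mem_segment ℝ a b)
  have hbd := hu d (right_mem_segment ℝ c d) b (right_mem_segment ℝ a b)
  have hb : (d - b) / (c - b) = (b - d) / (b - c) := by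
    rw [← neg_sub b d, ← neg_sub b c, neg_div_neg_eq]
  have ha : (d - a) / (c - a) = (a - d) / (a - c) := by
    rw [← neg_sub a d, ← neg_sub a c, neg_div_neg_eq]
  rw [hb, ha, arg_div_eq_sub_of_re_mul_pos hbd hbc, arg_div_eq_sub_of_re_mul_pos had hac,
    arg_div_eq_sub_of_re_mul_pos hbd had, arg_div_eq_sub_of_re_mul_pos hbc hac]
  ring

namespace Joins_s11

variable {a b c d : ℂ} {l m : List ℂ}

theorem angSum_sub_angSum_of_disjoint_segment (hm : Joins_s11 m c d)
    (h : Disjoint (segment ℝ a b) (imagePL m)) :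
    angSum b m - angSum a m =
      Complex.arg ((b - d) / (a - d)) - Complex.arg ((b - c) / (a - c)) := by
  induction hm with
  | singleton => simp [angSum]
  | cons c _ ih =>
    obtain ⟨hseg, htail⟩ := Set.disjoint_union_right.mp h
    rw [angSum, angSum]
    linarith [ih htail, arg_div_sub_arg_div_comm hseg]

theorem angSum_sub_angSum_comm (hl : Joins_s11 l a b) (hm : Joins_s11 m c d)
    (h : Disjoint (imagePL l) (imagePL m)) :
    angSum b m - angSum a m = angSum d l - angSum c l := by
  induction hl with
  | singleton => simp [angSum]
  | cons a _ ih =>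
    obtain ⟨hseg, htail⟩ := Set.disjoint_union_left.mp h
    rw [angSum, angSum]
    linarith [ih htail, hm.angSum_sub_angSum_of_disjoint_segment hseg]

theorem wp_sub_wp_comm (hl : Joins_s11 l a b) (hm : Joins_s11 m c d)
    (h : Disjoint (imagePL l) (imagePL m)) : wp b m - wp a m = wp d l - wp c l := by
  simp only [wp, ← sub_div, hl.angSum_sub_angSum_comm hm h]

end Joins_s11

theorem exists_div_two_pi_eq_add_intCast {θ ψ : ℝ} (h : (θ : Real.Angle) = ψ) :
    ∃ k : ℤ, θ / (2 * Real.pi) = ψ / (2 * Real.pi) + k := by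
  obtain ⟨k, hk⟩ := Real.Angle.angle_eq_iff_two_pi_dvd_sub.mp h
  refine ⟨k, ?_⟩
  rw [eq_add_of_sub_eq hk]
  field_simp [Real.pi_ne_zero]
  ring

theorem coe_arg_triangle_add_eq_pi {a b c : ℂ} (hab : a ≠ b) (hbc : b ≠ c) (hca : c ≠ a) :
    (Complex.arg ((b - c) / (a - c)) + Complex.arg ((c - a) / (b - a)) +
      Complex.arg ((a - b) / (c - b)) : Real.Angle) = Real.pi := by
  have hab₀ : a - b ≠ 0 := sub_ne_zero.mpr hab
  have hba₀ : b - a ≠ 0 := sub_ne_zero.mpr hab.symm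
  have hbc₀ : b - c ≠ 0 := sub_ne_zero.mpr hbc
  have hcb₀ : c - b ≠ 0 := sub_ne_zero.mpr hbc.symm
  have hca₀ : c - a ≠ 0 := sub_ne_zero.mpr hca
  have hac₀ : a - c ≠ 0 := sub_ne_zero.mpr hca.symm
  have hprod : (b - c) / (a - c) * ((c - a) / (b - a)) * ((a - b) / (c - b)) = -1 := by
    rw [← neg_sub c b, ← neg_sub a c, ← neg_sub b a]
    field_simp
  have hc := div_ne_zero hbc₀ hac₀
  have ha := div_ne_zero hca₀ hba₀
  rw [← Complex.arg_mul_coe_angle hc ha,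
    ← Complex.arg_mul_coe_angle (mul_ne_zero hc ha) (div_ne_zero hab₀ hcb₀), hprod,
    Complex.arg_neg_one]

namespace Joins_s11

variable {a b c O : ℂ} {l m n : List ℂ}

theorem exists_wp_add_wp_add_wp_eq_intCast (hl : Joins_s11 l a b) (hm : Joins_s11 m b c) (hn : Joins_s11 n c a)
    (hOl : O ∉ imagePL l) (hOm : O ∉ imagePL m) (hOn : O ∉ imagePL n) :
    ∃ k : ℤ, wp O l + wp O m + wp O n = k := by
  have ha : a - O ≠ 0 := sub_ne_zero.mpr (ne_of_mem_of_not_mem hl.left_mem_imagePL_s11 hOl)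
  have hb : b - O ≠ 0 := sub_ne_zero.mpr (ne_of_mem_of_not_mem hm.left_mem_imagePL_s11 hOm)
  have hc : c - O ≠ 0 := sub_ne_zero.mpr (ne_of_mem_of_not_mem hn.left_mem_imagePL_s11 hOn)
  have hangle : ((angSum O l + angSum O m + angSum O n : ℝ) : Real.Angle) = (0 : ℝ) := by
    rw [Real.Angle.coe_add, Real.Angle.coe_add, hl.coe_angSum_s11 hOl, hm.coe_angSum_s11 hOm,
      hn.coe_angSum_s11 hOn, Complex.arg_div_coe_angle hb ha, Complex.arg_div_coe_angle hc hb,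
      Complex.arg_div_coe_angle ha hc, Real.Angle.coe_zero]
    abel
  obtain ⟨k, hk⟩ := exists_div_two_pi_eq_add_intCast hangle
  refine ⟨k, ?_⟩
  rwa [add_div, add_div, zero_div, zero_add] at hk

theorem exists_wp_opposite_vertex_add_eq_half_add_intCast (hl : Joins_s11 l a b) (hm : Joins_s11 m b c)
    (hn : Joins_s11 n c a) (hc : c ∉ imagePL l) (ha : a ∉ imagePL m) (hb : b ∉ imagePL n) :
    ∃ k : ℤ, wp c l + wp a m + wp b n = 1 / 2 + k := by
  have hangle : ((angSum c l + angSum a m + angSum b n : ℝ) : Real.Angle) = Real.pi := by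
    rw [Real.Angle.coe_add, Real.Angle.coe_add, hl.coe_angSum_s11 hc, hm.coe_angSum_s11 ha,
      hn.coe_angSum_s11 hb]
    exact coe_arg_triangle_add_eq_pi (ne_of_mem_of_not_mem hn.right_mem_imagePL_s11 hb)
      (ne_of_mem_of_not_mem hl.right_mem_imagePL_s11 hc) (ne_of_mem_of_not_mem hm.right_mem_imagePL_s11 ha)
  have hhalf : Real.pi / (2 * Real.pi) = 1 / 2 := by
    field_simp
  obtain ⟨k, hk⟩ := exists_div_two_pi_eq_add_intCast hangle
  refine ⟨k, ?_⟩
  rwa [add_div, add_div, hhalf] at hk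

end Joins_s11

/-- Let `f` be an almost embedding of `K₄` in the plane (four pairwise
distinct points `f 0, f 1, f 2, f 3`, a polygonal line `p i j` joining `f i` to `f j`
for each edge `{i,j}` with `p j i` the reverse of `p i j`, images of non-adjacent edges
disjoint, and `f l` not on the image of any edge `{i,j}` with `l ∉ {i,j}`). Then
`w_f(234, 1) + w_f(134, 2) + w_f(124, 3) + w_f(123, 4)` is an odd integer, where
`w_f(ijk, l) := w'(p i j, f l) + w'(p j k, f l) + w'(p k i, f l)`
(vertices `1,2,3,4` are encoded as `0,1,2,3 : Fin 4`). -/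
theorem sum_winding_odd_K4 (f : Fin 4 → ℂ) (p : Fin 4 → Fin 4 → List ℂ)
    (hinj : Function.Injective f)
    (hne : ∀ i j, i ≠ j → p i j ≠ [])
    (hjoin : ∀ i j, ∀ h : i ≠ j,
      (p i j).headI = f i ∧ (p i j).getLast (hne i j h) = f j)
    (hsym : ∀ i j, p j i = (p i j).reverse)
    (hdisj : ∀ i j k l : Fin 4, i ≠ j → k ≠ l → i ≠ k → i ≠ l → j ≠ k → j ≠ l →
      Disjoint (imagePL (p i j)) (imagePL (p k l)))
    (hvert : ∀ i j l : Fin 4, i ≠ j → l ≠ i → l ≠ j → f l ∉ imagePL (p i j)) :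
    ∃ n : ℤ, Odd n ∧
      (wp (f 0) (p 1 2) + wp (f 0) (p 2 3) + wp (f 0) (p 3 1)) +
      (wp (f 1) (p 0 2) + wp (f 1) (p 2 3) + wp (f 1) (p 3 0)) +
      (wp (f 2) (p 0 1) + wp (f 2) (p 1 3) + wp (f 2) (p 3 0)) +
      (wp (f 3) (p 0 1) + wp (f 3) (p 1 2) + wp (f 3) (p 2 0)) = n := by
  have joins (i j : Fin 4) (h : i ≠ j) : Joins_s11 (p i j) (f i) (f j) :=
    (hjoin i j h).1 ▸ (hjoin i j h).2 ▸ joins_headI_getLast _ (hne i j h)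
  have avoids (i j l : Fin 4) (h : i ≠ j ∧ l ≠ i ∧ l ≠ j) : f l ∉ imagePL (p i j) :=
    hvert i j l h.1 h.2.1 h.2.2
  have reverse (i j l : Fin 4) (h : i ≠ j ∧ l ≠ i ∧ l ≠ j) :
      wp (f l) (p j i) = -wp (f l) (p i j) :=
    hsym i j ▸ wp_reverse (avoids i j l h)
  have exchange (i j k l : Fin 4) (h : i ≠ j ∧ k ≠ l ∧ i ≠ k ∧ i ≠ l ∧ j ≠ k ∧ j ≠ l) :
      wp (f j) (p k l) - wp (f i) (p k l) = wp (f l) (p i j) - wp (f k) (p i j) :=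
    have ⟨hij, hkl, hik, hil, hjk, hjl⟩ := h
    (joins i j hij).wp_sub_wp_comm (joins k l hkl) (hdisj i j k l hij hkl hik hil hjk hjl)
  obtain ⟨t, ht⟩ := (joins 0 1 (by decide)).exists_wp_opposite_vertex_add_eq_half_add_intCast
    (joins 1 2 (by decide)) (joins 2 0 (by decide))
    (avoids 0 1 2 (by decide)) (avoids 1 2 0 (by decide)) (avoids 2 0 1 (by decide))
  obtain ⟨w, hw⟩ := (joins 0 2 (by decide)).exists_wp_add_wp_add_wp_eq_intCast
    (joins 2 3 (by decide)) (joins 3 0 (by decide))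
    (avoids 0 2 1 (by decide)) (avoids 2 3 1 (by decide)) (avoids 3 0 1 (by decide))
  refine ⟨2 * (t + w) + 1, ⟨_, rfl⟩, ?_⟩
  push_cast
  linarith [exchange 0 1 2 3 (by decide), exchange 2 0 1 3 (by decide),
    exchange 3 0 1 2 (by decide), reverse 1 3 0 (by decide), reverse 0 2 1 (by decide)]
end
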